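/- Let p be prime and choose an integer n with 3 ≤ n ≤ p + 1. Choose n concurrent lines ℓ_1, …, ℓ_n in PG(2,p) with common point P. Then C(2,p) contains an odd codeword on the n lines ℓ_1, …, ℓ_n which cannot be written as a sum of codewords each of whose support is contained in the union of fewer than n lines through P. -/

import Mathlib

/-!
Fix coordinates with `P = ⟨w⟩`, index the lines through `P` by directions `s` in the projective
line `Option (ZMod p)`, and parametrize the points other than `P` of such a line by `z` in
`ZMod p`. Put `d = p + 1 - n`, so `d ≤ p - 2`. The argument rests on the moment
`∑ z, z ^ d * c (s, z)` of a word `c`.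

For every `c` in the code the moment is a binary form of degree `d` in the direction `s`
(`code_hasBinaryMoment`): a line missing `P` gives the `d`-th power of a linear form, and a line
through `P` gives zero because `∑ z, z ^ d = 0`. A codeword supported on fewer than `n` lines
through `P` has moment zero in at least `d + 1` directions, so its moment vanishes identically
(`HasBinaryMoment.eq_zero`), and the same holds for sums of such codewords.

It remains to exhibit a codeword supported on the `n` given lines whose moment is nonzero in each
of the `n` directions; it cannot be constant on one of these lines minus `P`, again since
`∑ z, z ^ d = 0`. The product of the linear forms of the `d` remaining lines through `P` with
`u ^ (n - 2)`, where `u` is a linear form not vanishing at `P`, has these properties. It lies in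
the code because every product of `p - 1` linear forms does (`prod_mem_code`): for powers
`a ^ (p - 1)` this holds as `1 - a ^ (p - 1)` is the characteristic function of a line, and
polarization gives the general case.
-/

attribute [local instance] Classical.propDecidable

noncomputable section

/-- Points of `PG(2,q)`: 1-dimensional subspaces of `F³`. -/
abbrev PGPoint (F : Type) [Field F] := Projectivization F (Fin 3 → F)

instance (F : Type) [Field F] [Fintype F] : Finite (PGPoint F) := Quotient.finite _

variable {F : Type} [Field F]

/-- Incidence between a line with dual coordinates `l` and a point `P` of `PG(2,q)`. -/
def PGIncident (l P : PGPoint F) : Prop := ∑ i, l.rep i * P.rep i = 0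

/-- The number of points of the multiset `M`, counted with multiplicity, on the line `l`. -/
def lineMeets (M : Multiset (PGPoint F)) (l : PGPoint F) : ℕ :=
  Multiset.countP (PGIncident l) M

/-- The multiset of all points of the line `l`, each with multiplicity one. -/
def pgLinePts [Fintype F] (l : PGPoint F) : Multiset (PGPoint F) :=
  (Set.toFinite {P | PGIncident l P}).toFinset.val

/-- The characteristic function (with values in `𝔽_p`) of the line `l`. -/
def chi (p : ℕ) (l : PGPoint F) : PGPoint F → ZMod p :=
  fun P => if PGIncident l P then 1 else 0

/-- The code `C(2,q)`: the `𝔽_p`-linear span of the characteristic functions of lines. -/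
def code (p : ℕ) (F : Type) [Field F] : Submodule (ZMod p) (PGPoint F → ZMod p) :=
  Submodule.span (ZMod p) (Set.range (chi p))

open Matrix Projectivization

/-! ### Power sums over the prime field -/

theorem sum_pow_zmod (p : ℕ) [Fact p.Prime] (i : ℕ) :
    ∑ t : ZMod p, t ^ i = if i ≠ 0 ∧ p - 1 ∣ i then -1 else 0 := by
  by_cases hi : i = 0
  · subst hi; simp
  · have h1 : ∑ t : ZMod p, t ^ i = ∑ t : (ZMod p)ˣ, (t : ZMod p) ^ i := by
      rw [← Finset.sum_subset (Finset.subset_univ (Finset.univ.filter (fun t : ZMod p => t ≠ 0)))]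
      · symm
        refine Finset.sum_bij (fun t _ => (t : ZMod p)) ?_ ?_ ?_ ?_
        · intro t _; simp
        · intro t _ t' _ h; exact Units.ext h
        · intro t ht
          exact ⟨Units.mk0 t (by simpa using ht), Finset.mem_univ _, rfl⟩
        · intro t _; rfl
      · intro t _ ht
        have : t = 0 := by simpa using ht
        simp [this, hi]
    rw [h1]
    have h2 := FiniteField.sum_pow_units (ZMod p) i
    rw [ZMod.card] at h2
    rw [h2]
    simp [hi]

/-- Extraction of the linear coefficient in `t` of `(tL + U) ^ (e + 1)`; the degree is below `p`,
so only the exponent `p - 1` contributes to the power sum. -/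
theorem sum_mul_add_pow (p : ℕ) [Fact p.Prime] (e : ℕ) (he : e + 1 ≤ p - 1) (L U : ZMod p) :
    ∑ t : ZMod p, t ^ (p - 2) * (t * L + U) ^ (e + 1) = -((e + 1 : ℕ) : ZMod p) * (L * U ^ e) := by
  have hp := (Fact.out : p.Prime).two_le
  simp_rw [add_pow, Finset.mul_sum]
  rw [Finset.sum_comm]
  have : ∀ j ∈ Finset.range (e + 1 + 1), ∑ t : ZMod p,
      t ^ (p - 2) * ((t * L) ^ j * U ^ (e + 1 - j) * ((e + 1).choose j : ZMod p))
      = if j = 1 then -((e + 1 : ℕ) : ZMod p) * (L * U ^ e) else 0 := by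
    intro j hj
    have hj' : j ≤ e + 1 := by simpa [Nat.lt_succ_iff] using hj
    have h1 : ∀ t : ZMod p,
        t ^ (p - 2) * ((t * L) ^ j * U ^ (e + 1 - j) * ((e + 1).choose j : ZMod p))
        = t ^ (p - 2 + j) * (L ^ j * U ^ (e + 1 - j) * ((e + 1).choose j : ZMod p)) := by
      intro t; rw [pow_add, mul_pow]; ring
    simp_rw [h1]
    rw [← Finset.sum_mul, sum_pow_zmod]
    by_cases hj1 : j = 1
    · subst hj1
      have h2 : p - 2 + 1 = p - 1 := by omega
      rw [h2, if_pos ⟨by omega, dvd_rfl⟩]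
      simp
      ring
    · rw [if_neg, zero_mul, if_neg hj1]
      rintro ⟨h2, k, hk⟩
      have hk0 : k ≠ 0 := by rintro rfl; simp at hk; omega
      rcases Nat.lt_or_ge k 2 with hk2 | hk2
      · have : k = 1 := by omega
        subst this
        omega
      · have : (p - 1) * 2 ≤ (p - 1) * k := Nat.mul_le_mul_left _ hk2
        omega
  rw [Finset.sum_congr rfl this]
  simp

/-! ### Products of linear forms in the code -/

theorem incident_mk_iff (l : PGPoint F) (v : Fin 3 → F) (hv : v ≠ 0) :
    PGIncident l (mk F v hv) ↔ l.rep ⬝ᵥ v = 0 := by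
  obtain ⟨a, ha⟩ := exists_smul_eq_mk_rep F v hv
  show l.rep ⬝ᵥ (mk F v hv).rep = 0 ↔ _
  rw [← ha, Units.smul_def, dotProduct_smul]
  simp

theorem mk_incident_iff (v : Fin 3 → F) (hv : v ≠ 0) (Q : PGPoint F) :
    PGIncident (mk F v hv) Q ↔ v ⬝ᵥ Q.rep = 0 := by
  obtain ⟨a, ha⟩ := exists_smul_eq_mk_rep F v hv
  show (mk F v hv).rep ⬝ᵥ Q.rep = 0 ↔ _
  rw [← ha, Units.smul_def, smul_dotProduct]
  simp

/-- The all-one word is the sum of the lines of a pencil. -/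
theorem one_mem_code (p : ℕ) [Fact p.Prime] : (fun _ => 1) ∈ code p (ZMod p) := by
  have h0 : ∀ t : ZMod p, ![1, t, 0] ≠ 0 := by
    intro t h
    have := congrFun h 0
    simp at this
  have h1 : ![(0 : ZMod p), 1, 0] ≠ 0 := by
    intro h
    have := congrFun h 1
    simp at this
  have : (fun _ => 1) = ∑ t : ZMod p, chi p (mk (ZMod p) _ (h0 t)) + chi p (mk (ZMod p) _ h1) := by
    funext Q
    simp only [Pi.add_apply, Finset.sum_apply, chi, mk_incident_iff, dotProduct, Fin.sum_univ_three]
    simp only [cons_val]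
    generalize Q.rep 0 = x
    generalize Q.rep 1 = y
    by_cases hy : y = 0
    · subst hy
      by_cases hx : x = 0 <;> simp [hx]
    · have : ∀ t : ZMod p, (1 * x + t * y + 0 * Q.rep 2 = 0) ↔ t = -x / y := by
        intro t
        rw [eq_div_iff hy]
        constructor <;> intro h <;> linear_combination h
      simp only [this]
      simpa using hy
  rw [this]
  exact add_mem (sum_mem fun t _ => Submodule.subset_span ⟨_, rfl⟩) (Submodule.subset_span ⟨_, rfl⟩)

theorem pow_mem_code (p : ℕ) [Fact p.Prime] (u : Fin 3 → ZMod p) :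
    (fun Q : PGPoint (ZMod p) => (u ⬝ᵥ Q.rep) ^ (p - 1)) ∈ code p (ZMod p) := by
  have hp := (Fact.out : p.Prime).two_le
  by_cases hu : u = 0
  · have : (fun Q : PGPoint (ZMod p) => (u ⬝ᵥ Q.rep) ^ (p - 1)) = 0 := by
      funext Q
      simp [hu, zero_pow (show p - 1 ≠ 0 by omega)]
    rw [this]; exact zero_mem _
  · have : (fun Q : PGPoint (ZMod p) => (u ⬝ᵥ Q.rep) ^ (p - 1))
        = (fun _ => 1) - chi p (mk (ZMod p) u hu) := by
      funext Q
      simp only [Pi.sub_apply, chi, mk_incident_iff]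
      split_ifs with h
      · simp [h, zero_pow (show p - 1 ≠ 0 by omega)]
      · rw [ZMod.pow_card_sub_one_eq_one h]; simp
    rw [this]
    exact sub_mem (one_mem_code p) (Submodule.subset_span ⟨_, rfl⟩)

/-- Polarization: powers `u ^ (p - 1)` are replaced by products one factor at a time. The step
extracts the coefficient of `t` in `(u + t a) ^ (e + 1)`, which is possible because `e + 1 < p`. -/
theorem prod_mem_code (p : ℕ) [Fact p.Prime] {ι : Type} (a : ι → Fin 3 → ZMod p) (s : Finset ι) :
    ∀ (e : ℕ) (_ : s.card + e = p - 1) (u : Fin 3 → ZMod p),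
    (fun Q : PGPoint (ZMod p) => (∏ i ∈ s, a i ⬝ᵥ Q.rep) * (u ⬝ᵥ Q.rep) ^ e) ∈ code p (ZMod p) := by
  have hp := (Fact.out : p.Prime).two_le
  induction s using Finset.induction_on with
  | empty =>
    intro e he u
    have : e = p - 1 := by simpa using he
    subst this
    simpa using pow_mem_code p u
  | insert j s hj ih =>
    intro e he u
    rw [Finset.card_insert_of_notMem hj] at he
    have he0 : ((e + 1 : ℕ) : ZMod p) ≠ 0 := by
      rw [Ne, ZMod.natCast_eq_zero_iff]
      intro h
      have := Nat.le_of_dvd (by omega) h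
      omega
    have key : (fun Q : PGPoint (ZMod p) =>
          (∏ i ∈ insert j s, a i ⬝ᵥ Q.rep) * (u ⬝ᵥ Q.rep) ^ e)
        = (-((e + 1 : ℕ) : ZMod p)⁻¹) • ∑ t : ZMod p, t ^ (p - 2) •
          (fun Q : PGPoint (ZMod p) =>
            (∏ i ∈ s, a i ⬝ᵥ Q.rep) * ((t • a j + u) ⬝ᵥ Q.rep) ^ (e + 1)) := by
      funext Q
      simp only [Pi.smul_apply, Finset.sum_apply, smul_eq_mul, Finset.prod_insert hj,
        add_dotProduct, smul_dotProduct]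
      have h := sum_mul_add_pow p e (by omega) (a j ⬝ᵥ Q.rep) (u ⬝ᵥ Q.rep)
      have h2 : ∑ t : ZMod p, t ^ (p - 2) * ((∏ i ∈ s, a i ⬝ᵥ Q.rep) *
          (t * (a j ⬝ᵥ Q.rep) + u ⬝ᵥ Q.rep) ^ (e + 1)) = (∏ i ∈ s, a i ⬝ᵥ Q.rep) *
          (-((e + 1 : ℕ) : ZMod p) * (a j ⬝ᵥ Q.rep * (u ⬝ᵥ Q.rep) ^ e)) := by
        rw [← h, Finset.mul_sum]
        exact Finset.sum_congr rfl fun t _ => by ring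
      rw [h2]
      field_simp
    rw [key]
    exact Submodule.smul_mem _ _ (sum_mem fun t _ => Submodule.smul_mem _ _ (ih _ (by omega) _))

/-! ### Coordinates adapted to a point -/

/-- Coordinates of `F³` adapted to a vector `w`: the basis `w, e₁, e₂` together with its dual
basis `u, a₁, a₂`, where linear forms are vectors acting by the dot product. -/
structure Frame (w : Fin 3 → F) where
  e₁ : Fin 3 → F
  e₂ : Fin 3 → F
  u : Fin 3 → F
  a₁ : Fin 3 → F
  a₂ : Fin 3 → F
  uw : u ⬝ᵥ w = 1
  ue₁ : u ⬝ᵥ e₁ = 0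
  ue₂ : u ⬝ᵥ e₂ = 0
  a₁w : a₁ ⬝ᵥ w = 0
  a₁e₁ : a₁ ⬝ᵥ e₁ = 1
  a₁e₂ : a₁ ⬝ᵥ e₂ = 0
  a₂w : a₂ ⬝ᵥ w = 0
  a₂e₁ : a₂ ⬝ᵥ e₁ = 0
  a₂e₂ : a₂ ⬝ᵥ e₂ = 1
  expand : ∀ a : Fin 3 → F, a = (a ⬝ᵥ w) • u + (a ⬝ᵥ e₁) • a₁ + (a ⬝ᵥ e₂) • a₂

theorem Frame.exists (w : Fin 3 → F) (hw : w ≠ 0) : Nonempty (Frame w) := by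
  obtain ⟨i, hi⟩ := Function.ne_iff.mp hw
  simp only [Pi.zero_apply] at hi
  fin_cases i
  · simp only [Fin.zero_eta] at hi
    refine ⟨⟨![0, 1, 0], ![0, 0, 1], ![(w 0)⁻¹, 0, 0], ![-w 1 / w 0, 1, 0], ![-w 2 / w 0, 0, 1],
      ?_, ?_, ?_, ?_, ?_, ?_, ?_, ?_, ?_, ?_⟩⟩
    on_goal 10 =>
      intro a
      funext i
      fin_cases i
    all_goals simp [dotProduct, Fin.sum_univ_three]
    all_goals try field_simp
    all_goals try ring
  · simp only [Fin.mk_one] at hi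
    refine ⟨⟨![1, 0, 0], ![0, 0, 1], ![0, (w 1)⁻¹, 0], ![1, -w 0 / w 1, 0], ![0, -w 2 / w 1, 1],
      ?_, ?_, ?_, ?_, ?_, ?_, ?_, ?_, ?_, ?_⟩⟩
    on_goal 10 =>
      intro a
      funext i
      fin_cases i
    all_goals simp [dotProduct, Fin.sum_univ_three]
    all_goals try field_simp
    all_goals try ring
  · simp only [Fin.reduceFinMk] at hi
    refine ⟨⟨![1, 0, 0], ![0, 1, 0], ![0, 0, (w 2)⁻¹], ![1, 0, -w 0 / w 2], ![0, 1, -w 1 / w 2],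
      ?_, ?_, ?_, ?_, ?_, ?_, ?_, ?_, ?_, ?_⟩⟩
    on_goal 10 =>
      intro a
      funext i
      fin_cases i
    all_goals simp [dotProduct, Fin.sum_univ_three]
    all_goals try field_simp
    all_goals try ring

namespace Frame

variable {w : Fin 3 → F} (f : Frame w)

/-- The directions at `w`, indexed by the projective line `Option F`: `e₂` at infinity and
`e₁ + t e₂` at `t`. -/
def dir : Option F → Fin 3 → F
  | none => f.e₂
  | some t => f.e₁ + t • f.e₂

/-- The linear form, unique up to scaling, vanishing on `w` and on the direction `s`. -/
def form : Option F → Fin 3 → F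
  | none => f.a₁
  | some t => f.a₂ - t • f.a₁

theorem form_w (s : Option F) : f.form s ⬝ᵥ w = 0 := by
  cases s <;> simp [form, f.a₁w, f.a₂w, sub_dotProduct, smul_dotProduct]

theorem u_dir (s : Option F) : f.u ⬝ᵥ f.dir s = 0 := by
  cases s <;> simp [dir, f.ue₁, f.ue₂, dotProduct_add, dotProduct_smul]

theorem form_dir_eq_zero_iff (s s' : Option F) : f.form s ⬝ᵥ f.dir s' = 0 ↔ s = s' := by
  cases s <;> cases s' <;>
    simp [form, dir, f.a₁e₁, f.a₁e₂, f.a₂e₁, f.a₂e₂, dotProduct_add, dotProduct_smul,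
      sub_dotProduct, smul_dotProduct]
  rw [neg_add_eq_zero]

theorem exists_ne (s : Option F) : ∃ s', s' ≠ s := by
  cases s
  · exact ⟨some 0, by simp⟩
  · exact ⟨none, by simp⟩

theorem form_ne_zero (s : Option F) : f.form s ≠ 0 := by
  intro h
  obtain ⟨s', hs'⟩ := exists_ne s
  exact hs' ((f.form_dir_eq_zero_iff s s').mp (by simp [h])).symm

theorem pt_ne_zero (s : Option F) (z : F) : f.dir s + z • w ≠ 0 := by
  intro h
  obtain ⟨s', hs'⟩ := exists_ne s
  have h2 : f.form s' ⬝ᵥ (f.dir s + z • w) = 0 := by simp [h]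
  rw [dotProduct_add, dotProduct_smul, f.form_w] at h2
  exact hs' ((f.form_dir_eq_zero_iff s' s).mp (by simpa using h2))

/-- The affine parametrization of the line through `⟨w⟩` in direction `s`, with `⟨w⟩` removed. -/
def pt (s : Option F) (z : F) : PGPoint F := Projectivization.mk F (f.dir s + z • w) (f.pt_ne_zero s z)

/-- The line through `⟨w⟩` in direction `s`. -/
def line (s : Option F) : PGPoint F := Projectivization.mk F (f.form s) (f.form_ne_zero s)

theorem line_pt_iff (s s' : Option F) (z : F) : PGIncident (f.line s) (f.pt s' z) ↔ s = s' := by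
  rw [← f.form_dir_eq_zero_iff, pt, incident_mk_iff]
  obtain ⟨a, ha⟩ := exists_smul_eq_mk_rep F _ (f.form_ne_zero s)
  rw [line, ← ha, Units.smul_def, smul_dotProduct, dotProduct_add, dotProduct_smul, f.form_w]
  simp

theorem exists_form_eq_zero (q : Fin 3 → F) : ∃ s, f.form s ⬝ᵥ q = 0 := by
  by_cases h : f.a₁ ⬝ᵥ q = 0
  · exact ⟨none, h⟩
  · refine ⟨some ((f.a₂ ⬝ᵥ q) / (f.a₁ ⬝ᵥ q)), ?_⟩
    simp [form, sub_dotProduct, smul_dotProduct, h]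

theorem exists_eq_line (l : PGPoint F) (hl : l.rep ⬝ᵥ w = 0) : ∃ s, l = f.line s := by
  have hx := f.expand l.rep
  rw [hl, zero_smul, zero_add] at hx
  by_cases h : l.rep ⬝ᵥ f.e₂ = 0
  · refine ⟨none, ?_⟩
    rw [← l.mk_rep, line, mk_eq_mk_iff']
    refine ⟨l.rep ⬝ᵥ f.e₁, ?_⟩
    rw [h, zero_smul, add_zero] at hx
    exact hx.symm
  · refine ⟨some (-(l.rep ⬝ᵥ f.e₁) / (l.rep ⬝ᵥ f.e₂)), ?_⟩
    refine l.mk_rep.symm.trans ?_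
    rw [line, mk_eq_mk_iff']
    refine ⟨l.rep ⬝ᵥ f.e₂, ?_⟩
    conv_rhs => rw [hx]
    rw [form, smul_sub, smul_smul, mul_div_cancel₀ _ h, neg_smul, sub_neg_eq_add, add_comm]

end Frame

/-! ### Moments along the pencil -/

section Moment

variable {p : ℕ} [Fact p.Prime] {w : Fin 3 → ZMod p}

/-- The `d`-th moment of the word `c` along the line through `⟨w⟩` in direction `s`. -/
def moment (f : Frame w) (d : ℕ) (c : PGPoint (ZMod p) → ZMod p) (s : Option (ZMod p)) : ZMod p :=
  ∑ z : ZMod p, z ^ d * c (f.pt s z)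

theorem sum_pow_eq_zero {d : ℕ} (hd : d < p - 1) : ∑ z : ZMod p, z ^ d = 0 :=
  FiniteField.sum_pow_lt_card_sub_one (ZMod p) d (by rwa [ZMod.card])

/-- The word `c` has as `d`-th moments the values on the projective line of a binary form of
degree `d`, given here in dehomogenized shape: the value at infinity is the coefficient of
degree `d`. -/
def HasBinaryMoment (f : Frame w) (d : ℕ) (c : PGPoint (ZMod p) → ZMod p) : Prop :=
  ∃ G : Polynomial (ZMod p), G.natDegree ≤ d ∧ (∀ t, moment f d c (some t) = G.eval t) ∧
    moment f d c none = G.coeff d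

/-- For a line missing `⟨w⟩` the moment is the `d`-th power of a binary linear form, since the line
meets each line of the pencil in one affine point; for a line through `⟨w⟩` it is a multiple of
`∑ z, z ^ d = 0`. -/
theorem chi_hasBinaryMoment (f : Frame w) {d : ℕ} (hd : d < p - 1) (l : PGPoint (ZMod p)) :
    HasBinaryMoment f d (chi p l) := by
  have hm : ∀ s, moment f d (chi p l) s = ∑ z : ZMod p, z ^ d *
      (if l.rep ⬝ᵥ f.dir s + z * (l.rep ⬝ᵥ w) = 0 then 1 else 0) := by
    intro s
    unfold moment chi Frame.pt
    simp only [incident_mk_iff, dotProduct_add, dotProduct_smul, smul_eq_mul]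
  by_cases hw : l.rep ⬝ᵥ w = 0
  · have h0 : ∀ s, moment f d (chi p l) s = 0 := by
      intro s
      rw [hm]
      simp only [hw, mul_zero, add_zero]
      rw [← Finset.sum_mul, sum_pow_eq_zero hd, zero_mul]
    exact ⟨0, by simp, by simp [h0], by simp [h0]⟩
  · have h1 : ∀ s, moment f d (chi p l) s = (-(l.rep ⬝ᵥ f.dir s) / (l.rep ⬝ᵥ w)) ^ d := by
      intro s
      rw [hm]
      have : ∀ z : ZMod p, l.rep ⬝ᵥ f.dir s + z * (l.rep ⬝ᵥ w) = 0 ↔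
          z = -(l.rep ⬝ᵥ f.dir s) / (l.rep ⬝ᵥ w) := by
        intro z
        rw [eq_div_iff hw]
        constructor <;> intro h <;> linear_combination h
      simp [this]
    have hdeg : (Polynomial.C (-(l.rep ⬝ᵥ f.e₂) / (l.rep ⬝ᵥ w)) * Polynomial.X +
        Polynomial.C (-(l.rep ⬝ᵥ f.e₁) / (l.rep ⬝ᵥ w))).natDegree ≤ 1 :=
      Polynomial.natDegree_linear_le
    refine ⟨(Polynomial.C (-(l.rep ⬝ᵥ f.e₂) / (l.rep ⬝ᵥ w)) * Polynomial.X +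
        Polynomial.C (-(l.rep ⬝ᵥ f.e₁) / (l.rep ⬝ᵥ w))) ^ d, ?_, ?_, ?_⟩
    · simpa using Polynomial.natDegree_pow_le_of_le d hdeg
    · intro t
      rw [h1]
      simp only [Frame.dir, dotProduct_add, dotProduct_smul, smul_eq_mul, Polynomial.eval_pow,
        Polynomial.eval_add, Polynomial.eval_mul, Polynomial.eval_C, Polynomial.eval_X]
      congr 1
      ring
    · rw [h1]
      have := Polynomial.coeff_pow_of_natDegree_le (m := d) hdeg
      rw [mul_one] at this
      rw [this]
      simp [Frame.dir]

theorem code_hasBinaryMoment (f : Frame w) {d : ℕ} (hd : d < p - 1)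
    {c : PGPoint (ZMod p) → ZMod p} (hc : c ∈ code p (ZMod p)) : HasBinaryMoment f d c := by
  induction hc using Submodule.span_induction with
  | mem c hc =>
    obtain ⟨l, rfl⟩ := hc
    exact chi_hasBinaryMoment f hd l
  | zero => exact ⟨0, by simp [moment]⟩
  | add c c' _ _ h h' =>
    obtain ⟨G, h1, h2, h3⟩ := h
    obtain ⟨G', h1', h2', h3'⟩ := h'
    have hadd : ∀ s, moment f d (c + c') s = moment f d c s + moment f d c' s := by
      intro s; simp [moment, mul_add, Finset.sum_add_distrib]
    exact ⟨G + G', Polynomial.natDegree_add_le_of_degree_le h1 h1', by simp [hadd, h2, h2'],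
      by simp [hadd, h3, h3']⟩
  | smul a c _ h =>
    obtain ⟨G, h1, h2, h3⟩ := h
    have hsmul : ∀ s, moment f d (a • c) s = a * moment f d c s := by
      intro s
      simp only [moment, Pi.smul_apply, smul_eq_mul, Finset.mul_sum]
      exact Finset.sum_congr rfl fun _ _ => by ring
    exact ⟨a • G, (Polynomial.natDegree_smul_le _ _).trans h1, by simp [hsmul, h2],
      by simp [hsmul, h3]⟩

/-- A binary form of degree `d` with more than `d` zeros on the projective line vanishes. -/
theorem HasBinaryMoment.eq_zero {f : Frame w} {d : ℕ} {c : PGPoint (ZMod p) → ZMod p}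
    (h : HasBinaryMoment f d c) (S : Finset (Option (ZMod p))) (hS : d < S.card)
    (h0 : ∀ s ∈ S, moment f d c s = 0) (s : Option (ZMod p)) : moment f d c s = 0 := by
  obtain ⟨G, h1, h2, h3⟩ := h
  have hev : ∀ t ∈ S.eraseNone, G.eval t = 0 := by
    intro t ht
    rw [← h2]
    exact h0 _ (Finset.mem_eraseNone.mp ht)
  have hG : G = 0 := by
    refine Polynomial.eq_zero_of_degree_lt_of_eval_finset_eq_zero S.eraseNone ?_ hev
    rw [Polynomial.degree_lt_iff_coeff_zero]
    intro m hm
    by_cases hn : none ∈ S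
    · have hcard : S.eraseNone.card + 1 = S.card := by
        rw [Finset.card_eraseNone_of_mem hn]
        have := Finset.card_pos.mpr ⟨_, hn⟩
        omega
      rcases (show d ≤ m by omega).eq_or_lt with rfl | hlt
      · rw [← h3, h0 _ hn]
      · exact Polynomial.coeff_eq_zero_of_natDegree_lt (h1.trans_lt hlt)
    · rw [Finset.card_eraseNone_of_not_mem hn] at hm
      exact Polynomial.coeff_eq_zero_of_natDegree_lt (by omega)
  cases s
  · simp [h3, hG]
  · simp [h2, hG]

end Moment

/-! ### The odd codeword -/

theorem stmt15 (p : ℕ) [Fact p.Prime] (n : ℕ) (h3 : 3 ≤ n) (hn : n ≤ p + 1)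
    (l : Fin n → PGPoint (ZMod p)) (P : PGPoint (ZMod p))
    (hinj : Function.Injective l) (hP : ∀ i, PGIncident (l i) P) :
    ∃ c : PGPoint (ZMod p) → ZMod p, c ∈ code p (ZMod p) ∧
      (∀ Q, c Q ≠ 0 → ∃ i, PGIncident (l i) Q) ∧
      (∀ i, ¬ ∃ k : ZMod p, ∀ Q, PGIncident (l i) Q → Q ≠ P → c Q = k) ∧
      ¬ ∃ (m : ℕ) (cs : Fin m → (PGPoint (ZMod p) → ZMod p)),
          (∀ j, cs j ∈ code p (ZMod p)) ∧
          (∀ j, ∃ (k : ℕ) (_ : k < n) (l' : Fin k → PGPoint (ZMod p)),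
            (∀ i, PGIncident (l' i) P) ∧ ∀ Q, cs j Q ≠ 0 → ∃ i, PGIncident (l' i) Q) ∧
          c = ∑ j, cs j := by
  have hp := (Fact.out : p.Prime).two_le
  obtain ⟨f⟩ := Frame.exists P.rep P.rep_nonzero
  choose σ hσ using fun i => f.exists_eq_line (l i) (hP i)
  have hσinj : Function.Injective σ := fun i j h => hinj (by rw [hσ i, hσ j, h])
  -- the number of lines of the pencil that are not among the given ones
  obtain ⟨d, hd⟩ : ∃ d, d + n = p + 1 := ⟨p + 1 - n, by omega⟩
  have hd' : d < p - 1 := by omega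
  set D : Finset (Option (ZMod p)) := (Finset.univ.image σ)ᶜ with hD
  have hDcard : D.card = d := by
    rw [hD, Finset.card_compl, Finset.card_image_of_injective _ hσinj]
    simp
    omega
  have hσD : ∀ i, σ i ∉ D := by intro i; simp [hD]
  set c : PGPoint (ZMod p) → ZMod p := fun Q =>
    (∏ s ∈ D, f.form s ⬝ᵥ Q.rep) * (f.u ⬝ᵥ Q.rep) ^ (n - 2) with hc
  have hcmem : c ∈ code p (ZMod p) := prod_mem_code p f.form D (n - 2) (by omega) f.u
  -- `c` has degree `p - 1`, so it can be evaluated on any representative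
  have hcpt : ∀ s z, c (f.pt s z) = (∏ s' ∈ D, f.form s' ⬝ᵥ f.dir s) * z ^ (n - 2) := by
    intro s z
    obtain ⟨a, ha⟩ := exists_smul_eq_mk_rep (ZMod p) _ (f.pt_ne_zero s z)
    simp only [hc, Frame.pt, ← ha, Units.smul_def, dotProduct_smul, dotProduct_add, f.form_w,
      f.u_dir, f.uw, smul_eq_mul, mul_zero, add_zero, mul_one, zero_add, Finset.prod_mul_distrib,
      Finset.prod_const, hDcard, mul_pow]
    have h1 : (a : ZMod p) ^ d * (a : ZMod p) ^ (n - 2) = 1 := by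
      rw [← pow_add, show d + (n - 2) = p - 1 by omega]
      exact ZMod.pow_card_sub_one_eq_one a.ne_zero
    linear_combination (∏ s' ∈ D, f.form s' ⬝ᵥ f.dir s) * z ^ (n - 2) * h1
  have hmom : ∀ i, moment f d c (σ i) ≠ 0 := by
    intro i
    have h1 : moment f d c (σ i) = -∏ s' ∈ D, f.form s' ⬝ᵥ f.dir (σ i) := by
      unfold moment
      have : ∀ z : ZMod p, z ^ d * c (f.pt (σ i) z)
          = (∏ s' ∈ D, f.form s' ⬝ᵥ f.dir (σ i)) * z ^ (p - 1) := by
        intro z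
        rw [hcpt, show p - 1 = d + (n - 2) by omega, pow_add]
        ring
      simp_rw [this]
      rw [← Finset.mul_sum, sum_pow_zmod, if_pos ⟨by omega, dvd_rfl⟩, mul_neg_one]
    rw [h1, neg_ne_zero, Finset.prod_ne_zero_iff]
    intro s hs h
    exact hσD i ((f.form_dir_eq_zero_iff _ _).mp h ▸ hs)
  refine ⟨c, hcmem, ?_, ?_, ?_⟩
  · intro Q hQ
    obtain ⟨s, hs⟩ := f.exists_form_eq_zero Q.rep
    have hsD : s ∉ D := fun h => hQ (mul_eq_zero_of_left (Finset.prod_eq_zero h hs) _)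
    obtain ⟨i, rfl⟩ : ∃ i, σ i = s := by simpa [hD] using hsD
    refine ⟨i, ?_⟩
    rw [hσ i, Frame.line, mk_incident_iff]
    exact hs
  · rintro i ⟨k, hk⟩
    apply hmom i
    have : ∀ z, c (f.pt (σ i) z) = k := by
      intro z
      apply hk
      · rw [hσ i, f.line_pt_iff]
      · intro h
        obtain ⟨s', hs'⟩ := Frame.exists_ne (σ i)
        refine hs' ((f.line_pt_iff s' (σ i) z).mp ?_)
        rw [h, Frame.line, mk_incident_iff, f.form_w]
    simp_rw [moment, this]
    rw [← Finset.sum_mul, sum_pow_eq_zero hd', zero_mul]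
  · rintro ⟨m, cs, hcs, hsupp, hsum⟩
    have hz : ∀ j s, moment f d (cs j) s = 0 := by
      intro j s
      obtain ⟨k, hk, l', hl', hs'⟩ := hsupp j
      choose τ hτ using fun i => f.exists_eq_line (l' i) (hl' i)
      refine (code_hasBinaryMoment f hd' (hcs j)).eq_zero (Finset.univ.image τ)ᶜ ?_ ?_ s
      · have h1 : (Finset.univ.image τ).card ≤ k := by
          simpa using Finset.card_image_le (s := Finset.univ) (f := τ)
        rw [Finset.card_compl]
        simp only [Fintype.card_option, ZMod.card]
        omega
      · intro s hs
        refine Finset.sum_eq_zero fun z _ => ?_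
        by_contra hne
        obtain ⟨i, hi⟩ := hs' _ (right_ne_zero_of_mul hne)
        rw [hτ i, f.line_pt_iff] at hi
        simp [← hi] at hs
    apply hmom ⟨0, by omega⟩
    rw [hsum]
    simp only [moment, Finset.sum_apply, Finset.mul_sum]
    rw [Finset.sum_comm]
    exact Finset.sum_eq_zero fun j _ => hz j _

end
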